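/- arXiv:1207.6945 — 2 statements merged into one kernel-verified Lean document; each statement's English description precedes it below -/
import Mathlib

section
/- There exists a constant C > 0 such that for every n : ℕ with n ≥ 2 and every real ξ with 0 < ξ < 1, there exist ℓ : ℕ with ℓ ≤ C · n² · log (n / ξ), a code generator Gen : PMF (Fin n → Fin ℓ → Bool), and a tracing function Trace : (Fin n → Fin ℓ → Bool) → (Fin ℓ → Bool) → Fin n, such that for every nonempty set S ⊆ Fin n and every adversary A : ({i : Fin n // i ∈ S} → Fin ℓ → Bool) → PMF (Fin ℓ → Bool), the probability, over W drawn from Gen and w' drawn from A applied to the restriction of W to S, that w' ∈ F(W_S) and Trace W w' ∉ S is at most ξ. -/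
open scoped ENNReal

/-!
The columns of the codebook are drawn independently. A column of Hamming weight `k` has
probability `q k / choose n k`, where the law `q` of the weight is symmetric and proportional to
`1 / √(k + 1) + 1 / √(n - k + 1)`. A user whose entry in a column of weight `k` is `1`
(resp. `0`) has *score* `U = n / (k q k)` (resp. `U = -n / ((n - k) q k)`) there, multiplied by
`+1` or `-1` according to the bit of the pirate word. The tracer accuses a user of maximal total
score. Unlike with hidden real biases, everything is a function of the codebook and the pirate word.

Two exact identities make this work.

* `mu_U_cancel`: given the entries of all other users, the score of user `i` in a column has mean
  zero. So if `i` is outside the coalition, no choice of the pirate bit biases the score of `i`.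
* `sum_score`: if the pirate bit occurs in the column, the scores in a column sum to `0`
  when the column is not constant, and to `n R` with `R = 1 / q 0` when it is constant. Hence a user
  of maximal total score has at least the sum over the columns of `R` (`le_score_of_max`).

So accusing an innocent `i` requires `∑ (score - R) ≥ 0` over the columns. With `K = 64 n²` and
`α = 1 / K`, estimate the expectation of `exp (α ∑ (score - R))` through
`exp x ≤ 1 + x + x²` in each column. The linear score terms cancel when row `i` is
resampled (`resum`), after which the bound no longer depends on the adversary and factors over the
columns. Since `E R = 2` (`sum_mu_R`) and `E U² ≤ K` (`sum_mu_sq`), each column contributes at most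
`1 - 2 α + α = 1 - 1 / K`, and `i` is accused with probability at most `exp (-ℓ / K)`
(`accuse_bound`). Taking `ℓ = ⌈K log (n / ξ)⌉` makes this at most `ξ / n`, and a union bound over
`i` finishes the proof. The estimate `E U² = O(n²)` is where the choice of `q` matters: it amounts to
`∑ (1 / q k) (1 / k + 1 / (n - k)) = O(n)`, which a uniform `q` would miss by a logarithm.
-/

namespace Tardos

/-! ### Sums over binary columns and codebooks -/

/-- The Hamming weight of a column. -/
def wt {n : ℕ} (v : Fin n → Bool) : ℕ := (Finset.univ.filter fun i => v i = true).card

lemma wt_le {n : ℕ} (v : Fin n → Bool) : wt v ≤ n := by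
  simpa [wt] using Finset.card_le_univ (Finset.univ.filter fun i => v i = true)

lemma sum_wt (n : ℕ) (F : ℕ → ℝ) :
    ∑ v : Fin n → Bool, F (wt v) = ∑ k ∈ Finset.range (n + 1), (n.choose k : ℝ) * F k := by
  have h := Finset.sum_powerset_apply_card F (x := (Finset.univ : Finset (Fin n)))
  simp only [Finset.powerset_univ, Finset.card_univ, Fintype.card_fin, nsmul_eq_mul] at h
  rw [← h]
  refine Finset.sum_bij' (fun v _ => Finset.univ.filter fun i => v i = true)
    (fun s _ i => decide (i ∈ s)) ?_ ?_ ?_ ?_ ?_ <;> simp [wt]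

/-- By symmetry, the sum on the left does not depend on `i`; averaging over `i` replaces the entry
`v i` by the numbers of ones and zeros of `v`. -/
lemma sum_coord_wt {n : ℕ} (i : Fin n) (G : Bool → ℕ → ℝ) :
    (n : ℝ) * ∑ v : Fin n → Bool, G (v i) (wt v) =
      ∑ k ∈ Finset.range (n + 1),
        (n.choose k : ℝ) * ((k : ℝ) * G true k + ((n : ℝ) - k) * G false k) := by
  have hsym : ∀ i' : Fin n, ∑ v : Fin n → Bool, G (v i') (wt v) =
      ∑ v : Fin n → Bool, G (v i) (wt v) := by
    intro i'
    refine Fintype.sum_equiv ((Equiv.swap i i').arrowCongr (Equiv.refl Bool)) _ _ ?_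
    intro v
    have : wt ((Equiv.swap i i').arrowCongr (Equiv.refl Bool) v) = wt v := by
      unfold wt
      refine Finset.card_bij' (fun a _ => Equiv.swap i i' a) (fun a _ => Equiv.swap i i' a)
        ?_ ?_ ?_ ?_ <;> simp [Equiv.arrowCongr]
    rw [this]
    simp [Equiv.arrowCongr]
  have h1 : (n : ℝ) * ∑ v : Fin n → Bool, G (v i) (wt v) =
      ∑ i' : Fin n, ∑ v : Fin n → Bool, G (v i') (wt v) := by
    simp [hsym]
  rw [h1, Finset.sum_comm, ← sum_wt n (fun k => (k : ℝ) * G true k + ((n : ℝ) - k) * G false k)]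
  refine Finset.sum_congr rfl fun v _ => ?_
  rw [← Finset.sum_filter_add_sum_filter_not Finset.univ (fun i => v i = true)]
  congr 1
  · rw [Finset.sum_congr rfl (g := fun _ => G true (wt v)) (by simp +contextual)]
    simp [wt]
  · rw [Finset.sum_congr rfl (g := fun _ => G false (wt v)) (by simp +contextual)]
    have := Finset.card_filter_add_card_filter_not (s := (Finset.univ : Finset (Fin n)))
      (fun i => v i = true)
    rw [Finset.card_univ, Fintype.card_fin] at this
    have h2 : ((Finset.univ.filter fun i => ¬ v i = true).card : ℝ) = n - wt v := by
      rw [eq_sub_iff_add_eq, add_comm]; exact_mod_cast this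
    rw [Finset.sum_const, nsmul_eq_mul, h2]

lemma wt_update_true {n : ℕ} (v : Fin n → Bool) (i : Fin n) :
    wt (Function.update v i true) = wt (Function.update v i false) + 1 := by
  unfold wt
  have : (Finset.univ.filter fun j => Function.update v i true j = true) =
      insert i (Finset.univ.filter fun j => Function.update v i false j = true) := by
    ext j
    by_cases h : j = i <;> simp [h, Function.update_apply]
  rw [this, Finset.card_insert_of_notMem (by simp)]

/-- Resampling row `i`: if the factor `B` ignores row `i`, then each column factor matters only
through its sum over the two values of the entry in row `i`. -/
lemma resum {n ℓ : ℕ} (i : Fin n) (B : (Fin n → Fin ℓ → Bool) → ℝ)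
    (hB : ∀ W r, B (Function.update W i r) = B W) (f g : Fin ℓ → (Fin n → Bool) → ℝ)
    (hfg : ∀ j v, ∑ b : Bool, f j (Function.update v i b) = ∑ b : Bool, g j (Function.update v i b)) :
    ∑ W, B W * ∏ j, f j (fun k => W k j) = ∑ W, B W * ∏ j, g j (fun k => W k j) := by
  have avg : ∀ F : (Fin n → Fin ℓ → Bool) → ℝ,
      ∑ W, ∑ r : Fin ℓ → Bool, F (Function.update W i r) = 2 ^ ℓ * ∑ W, F W := by
    intro F
    -- exchanging row `i` of `W` with `r` is an involution on pairs `(W, r)`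
    have h : ∑ W, ∑ r : Fin ℓ → Bool, F (Function.update W i r) =
        ∑ W, ∑ _r : Fin ℓ → Bool, F W := by
      rw [← Fintype.sum_prod_type', ← Fintype.sum_prod_type']
      refine Finset.sum_bij' (fun p _ => (Function.update p.1 i p.2, p.1 i))
        (fun p _ => (Function.update p.1 i p.2, p.1 i)) ?_ ?_ ?_ ?_ ?_ <;> simp
    rw [h]
    simp [Finset.mul_sum]
  have main : ∀ f : Fin ℓ → (Fin n → Bool) → ℝ,
      2 ^ ℓ * ∑ W, B W * ∏ j, f j (fun k => W k j) =
        ∑ W, B W * ∏ j, ∑ b : Bool, f j (Function.update (fun k => W k j) i b) := by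
    intro f
    rw [← avg]
    refine Finset.sum_congr rfl fun W _ => ?_
    rw [Finset.prod_univ_sum, Fintype.piFinset_univ, Finset.mul_sum]
    refine Finset.sum_congr rfl fun r _ => ?_
    rw [hB]
    congr 1
    refine Finset.prod_congr rfl fun j _ => ?_
    congr 1
    ext k
    by_cases h : k = i
    · subst h; simp
    · simp [h]
  have h := main f
  simp only [hfg] at h
  rw [← main g] at h
  exact mul_left_cancel₀ (by positivity) h

lemma sum_prod_col {n ℓ : ℕ} (f : (Fin n → Bool) → ℝ) :
    ∑ W : Fin n → Fin ℓ → Bool, ∏ j, f (fun k => W k j) = (∑ v, f v) ^ ℓ := by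
  have h : (∑ v, f v) ^ ℓ = ∏ _j : Fin ℓ, ∑ v, f v := by simp
  rw [h, Finset.prod_univ_sum, Fintype.piFinset_univ]
  exact Fintype.sum_equiv (Equiv.piComm _) _ _ (fun W => rfl)

/-! ### The law of the column weight -/

/-- Unnormalised probability that a column has weight `k`. -/
noncomputable def a (n k : ℕ) : ℝ := 1 / √((k : ℝ) + 1) + 1 / √((n : ℝ) - k + 1)

/-- The normalising constant of `a`. -/
noncomputable def D (n : ℕ) : ℝ := ∑ k ∈ Finset.range (n + 1), a n k

/-- The probability that a column has weight `k`. -/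
noncomputable def q (n k : ℕ) : ℝ := a n k / D n

lemma a_pos (n k : ℕ) : 0 < a n k := by
  unfold a; positivity

lemma D_pos (n : ℕ) : 0 < D n :=
  Finset.sum_pos (fun k _ => a_pos n k) ⟨0, by simp⟩

lemma q_pos (n k : ℕ) : 0 < q n k := div_pos (a_pos n k) (D_pos n)

lemma sum_q (n : ℕ) : ∑ k ∈ Finset.range (n + 1), q n k = 1 := by
  unfold q
  rw [← Finset.sum_div]
  exact div_self (D_pos n).ne'

lemma q_last (n : ℕ) : q n n = q n 0 := by
  simp [q, a, add_comm]

lemma sum_inv_sqrt (m : ℕ) : ∑ k ∈ Finset.range m, 1 / √((k : ℝ) + 1) ≤ 2 * √m := by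
  induction m with
  | zero => simp
  | succ m ih =>
    rw [Finset.sum_range_succ]
    push_cast
    have h1 : 0 < √((m : ℝ) + 1) := by positivity
    have h2 : √((m : ℝ) + 1) ^ 2 = m + 1 := Real.sq_sqrt (by positivity)
    have h3 : √(m : ℝ) ^ 2 = m := Real.sq_sqrt (by positivity)
    have : 1 / √((m : ℝ) + 1) ≤ 2 * √((m : ℝ) + 1) - 2 * √m := by
      rw [div_le_iff₀ h1]
      nlinarith [sq_nonneg (√((m : ℝ) + 1) - √m)]
    linarith

lemma sum_reflect (n : ℕ) (F : ℝ → ℝ) :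
    ∑ k ∈ Finset.range (n + 1), F ((n : ℝ) - k) = ∑ k ∈ Finset.range (n + 1), F k := by
  rw [← Finset.sum_range_reflect]
  refine Finset.sum_congr rfl fun k hk => ?_
  have : k ≤ n := by simpa [Nat.lt_succ_iff] using hk
  congr 1
  rw [show n + 1 - 1 - k = n - k by omega, Nat.cast_sub this]
  ring

lemma D_le (n : ℕ) : D n ≤ 4 * √((n : ℝ) + 1) := by
  unfold D a
  rw [Finset.sum_add_distrib, sum_reflect n (fun x => 1 / √(x + 1))]
  have := sum_inv_sqrt (n + 1)
  push_cast at this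
  linarith

lemma inv_term_le (k : ℕ) : √((k : ℝ) + 1) / k ≤ 2 / √((k : ℝ) + 1) := by
  rcases Nat.eq_zero_or_pos k with rfl | hk
  · simp
  · have hk' : (1 : ℝ) ≤ k := by exact_mod_cast hk
    rw [div_le_div_iff₀ (by positivity) (by positivity), Real.mul_self_sqrt (by positivity)]
    linarith

/-- The terms with denominator `0`, at `k = 0` and `k = n`, vanish by the convention `1 / 0 = 0`. -/
lemma inv_a_le (n k : ℕ) (hk : k ≤ n) :
    1 / a n k * (1 / k + 1 / ((n : ℝ) - k)) ≤
      2 / √((k : ℝ) + 1) + 2 / √((n : ℝ) - k + 1) := by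
  have hcast : ((n - k : ℕ) : ℝ) = (n : ℝ) - k := Nat.cast_sub hk
  have e1 := inv_term_le k
  have e2 := inv_term_le (n - k)
  have hnn : (0 : ℝ) ≤ (n : ℝ) - k := by rw [← hcast]; positivity
  rw [hcast] at e2
  have l1 : 1 / a n k ≤ √((k : ℝ) + 1) := by
    rw [div_le_iff₀ (a_pos n k), a, mul_add, mul_one_div_cancel (by positivity)]
    have : 0 ≤ √((k : ℝ) + 1) * (1 / √((n : ℝ) - k + 1)) := by positivity
    linarith
  have l2 : 1 / a n k ≤ √((n : ℝ) - k + 1) := by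
    rw [div_le_iff₀ (a_pos n k), a, mul_add, mul_one_div_cancel (a := √((n : ℝ) - k + 1)) (by positivity)]
    have : 0 ≤ √((n : ℝ) - k + 1) * (1 / √((k : ℝ) + 1)) := by positivity
    linarith
  have m1 := mul_le_mul_of_nonneg_right l1 (show (0 : ℝ) ≤ 1 / k by positivity)
  have m2 := mul_le_mul_of_nonneg_right l2 (show (0 : ℝ) ≤ 1 / ((n : ℝ) - k) by positivity)
  rw [mul_one_div, mul_one_div] at m1 m2
  rw [mul_add, mul_one_div, mul_one_div]
  linarith

/-- The second-moment estimate, up to a factor `n`: the normalising constant and the sum of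
`(1 / a) (1 / k + 1 / (n - k))` are both `O(√n)`. -/
lemma sum_inv_q_le (n : ℕ) (hn : 2 ≤ n) :
    ∑ k ∈ Finset.range (n + 1), 1 / q n k * (1 / k + 1 / ((n : ℝ) - k)) ≤ 64 * n := by
  have h1 : ∑ k ∈ Finset.range (n + 1), 1 / a n k * (1 / k + 1 / ((n : ℝ) - k)) ≤
      8 * √((n : ℝ) + 1) := by
    calc _ ≤ ∑ k ∈ Finset.range (n + 1), (2 / √((k : ℝ) + 1) + 2 / √((n : ℝ) - k + 1)) :=
          Finset.sum_le_sum fun k hk => inv_a_le n k (by simpa [Nat.lt_succ_iff] using hk)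
      _ = 4 * ∑ k ∈ Finset.range (n + 1), 1 / √((k : ℝ) + 1) := by
          rw [Finset.sum_add_distrib, sum_reflect n (fun x => 2 / √(x + 1)), ← two_mul,
            Finset.mul_sum, Finset.mul_sum]
          exact Finset.sum_congr rfl fun k _ => by ring
      _ ≤ _ := by
          have := sum_inv_sqrt (n + 1)
          push_cast at this
          linarith
  have h2 : ∑ k ∈ Finset.range (n + 1), 1 / q n k * (1 / k + 1 / ((n : ℝ) - k)) =
      D n * ∑ k ∈ Finset.range (n + 1), 1 / a n k * (1 / k + 1 / ((n : ℝ) - k)) := by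
    rw [Finset.mul_sum]
    refine Finset.sum_congr rfl fun k _ => ?_
    rw [q, one_div_div]; ring
  rw [h2]
  have hn' : (2 : ℝ) ≤ n := by exact_mod_cast hn
  calc _ ≤ D n * (8 * √((n : ℝ) + 1)) := mul_le_mul_of_nonneg_left h1 (D_pos n).le
    _ ≤ 4 * √((n : ℝ) + 1) * (8 * √((n : ℝ) + 1)) :=
        mul_le_mul_of_nonneg_right (D_le n) (by positivity)
    _ = 32 * (n + 1) := by
        linear_combination 32 * Real.mul_self_sqrt (show (0 : ℝ) ≤ (n : ℝ) + 1 by positivity)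
    _ ≤ _ := by linarith

/-! ### Column probabilities and scores -/

/-- The probability of the column `v`. -/
noncomputable def mu {n : ℕ} (v : Fin n → Bool) : ℝ := q n (wt v) / n.choose (wt v)

/-- The score, for a pirate bit `1`, of a user whose entry is `b` in a column of weight `k`. It is
meaningful when that combination occurs, that is, `k ≠ 0` for `b = true` and `k ≠ n` for
`b = false`; otherwise it is `0`. -/
noncomputable def U (n : ℕ) (b : Bool) (k : ℕ) : ℝ :=
  if b then n / (k * q n k) else -(n / (((n : ℝ) - k) * q n k))

/-- The average over the users of their scores in a column of weight `k`, if the pirate bit occurs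
in that column. -/
noncomputable def R (n k : ℕ) : ℝ := if k = 0 ∨ k = n then 1 / q n 0 else 0

/-- The sign `±1` encoding a pirate bit. -/
def sgn (y : Bool) : ℝ := if y then 1 else -1

lemma mu_nonneg {n : ℕ} (v : Fin n → Bool) : 0 ≤ mu v :=
  div_nonneg (q_pos _ _).le (Nat.cast_nonneg _)

lemma choose_mul_div (n k : ℕ) (hk : k ≤ n) (x : ℝ) :
    (n.choose k : ℝ) * (x / n.choose k) = x := by
  have : (n.choose k : ℝ) ≠ 0 := by exact_mod_cast (Nat.choose_pos hk).ne'
  field_simp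

lemma sum_mu (n : ℕ) (F : ℕ → ℝ) :
    ∑ v : Fin n → Bool, mu v * F (wt v) = ∑ k ∈ Finset.range (n + 1), q n k * F k := by
  unfold mu
  rw [sum_wt n (fun k => q n k / n.choose k * F k)]
  refine Finset.sum_congr rfl fun k hk => ?_
  rw [← mul_assoc, choose_mul_div n k (by simpa [Nat.lt_succ_iff] using hk)]

lemma sum_mu_one (n : ℕ) : ∑ v : Fin n → Bool, mu v = 1 := by
  simpa [sum_q] using sum_mu n (fun _ => 1)

lemma sum_mu_R (n : ℕ) (hn : 2 ≤ n) : ∑ v : Fin n → Bool, mu v * R n (wt v) = 2 := by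
  rw [sum_mu n (R n), Finset.sum_range_succ, Finset.sum_range_eq_add_Ico _ (by omega)]
  rw [Finset.sum_eq_zero]
  · have := (q_pos n 0).ne'
    simp [R, q_last]
    field_simp
    norm_num
  · intro k hk
    simp only [Finset.mem_Ico] at hk
    simp [R, show k ≠ 0 by omega, show k ≠ n by omega]

lemma sum_mu_sq {n : ℕ} (hn : 2 ≤ n) (i : Fin n) :
    ∑ v : Fin n → Bool, mu v * U n (v i) (wt v) ^ 2 ≤ 64 * (n : ℝ) ^ 2 := by
  have hn' : (0 : ℝ) < n := by positivity
  have h := sum_coord_wt i (fun b k => q n k / n.choose k * U n b k ^ 2)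
  have h2 : ∑ k ∈ Finset.range (n + 1),
        (n.choose k : ℝ) * ((k : ℝ) * (q n k / n.choose k * U n true k ^ 2) +
          ((n : ℝ) - k) * (q n k / n.choose k * U n false k ^ 2)) =
      n ^ 2 * ∑ k ∈ Finset.range (n + 1), 1 / q n k * (1 / k + 1 / ((n : ℝ) - k)) := by
    rw [Finset.mul_sum]
    refine Finset.sum_congr rfl fun k hk => ?_
    have hc := choose_mul_div n k (by simpa [Nat.lt_succ_iff] using hk) (q n k)
    have hq := (q_pos n k).ne'
    have e : ∀ x : ℝ, x * (q n k * (n / (x * q n k)) ^ 2) = n ^ 2 * (1 / q n k * (1 / x)) := by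
      intro x
      rcases eq_or_ne x 0 with rfl | hx
      · simp
      · field_simp
    have e1 := e k
    have e2 := e ((n : ℝ) - k)
    simp only [U, if_true, Bool.false_eq_true, if_false, neg_sq]
    linear_combination e1 + e2 + ((k : ℝ) * (n / (k * q n k)) ^ 2 +
      ((n : ℝ) - k) * (n / (((n : ℝ) - k) * q n k)) ^ 2) * hc
  rw [h2] at h
  have h3 := sum_inv_q_le n hn
  have h4 : (n : ℝ) * ∑ v : Fin n → Bool, mu v * U n (v i) (wt v) ^ 2 ≤
      n * (64 * (n : ℝ) ^ 2) := by
    unfold mu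
    rw [h]
    nlinarith [mul_le_mul_of_nonneg_left h3 (show (0 : ℝ) ≤ n ^ 2 by positivity)]
  exact le_of_mul_le_mul_left h4 hn'

/-- Each `|U|` is `n` times a single term of the sum bounded in `sum_inv_q_le`. -/
lemma abs_U_le {n : ℕ} (hn : 2 ≤ n) (b : Bool) (k : ℕ) (hk : k ≤ n) :
    |U n b k| ≤ 64 * (n : ℝ) ^ 2 := by
  have h3 := sum_inv_q_le n hn
  have hp : ∀ k' ∈ Finset.range (n + 1), 0 ≤ 1 / q n k' * (1 / (k' : ℝ) + 1 / ((n : ℝ) - k')) := by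
    intro k' hk'
    have : (0 : ℝ) ≤ (n : ℝ) - k' := by
      rw [sub_nonneg]; exact_mod_cast (by simpa [Nat.lt_succ_iff] using hk' : k' ≤ n)
    have := (q_pos n k').le
    positivity
  have h4 := (Finset.single_le_sum hp (Finset.mem_range.2 (Nat.lt_succ_of_le hk))).trans h3
  have hq := (q_pos n k)
  have hnk : (0 : ℝ) ≤ (n : ℝ) - k := by rw [sub_nonneg]; exact_mod_cast hk
  have e1 : (0 : ℝ) ≤ 1 / q n k * (1 / k) := by positivity
  have e2 : (0 : ℝ) ≤ 1 / q n k * (1 / ((n : ℝ) - k)) := by positivity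
  rw [mul_add] at h4
  have hn0 : (0 : ℝ) ≤ n := by positivity
  cases b
  · have : |U n false k| = n * (1 / q n k * (1 / ((n : ℝ) - k))) := by
      simp only [U, Bool.false_eq_true, if_false, abs_neg]
      rw [abs_of_nonneg (by positivity), mul_comm ((n : ℝ) - k), ← div_div]
      ring
    rw [this]
    nlinarith
  · have : |U n true k| = n * (1 / q n k * (1 / (k : ℝ))) := by
      simp only [U, if_true]
      rw [abs_of_nonneg (by positivity), mul_comm (k : ℝ), ← div_div]
      ring
    rw [this]
    nlinarith

/-- Conditionally on the other entries of the column, the score of user `i` has mean zero. -/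
lemma mu_U_cancel {n : ℕ} (v : Fin n → Bool) (i : Fin n) :
    ∑ b : Bool, mu (Function.update v i b) *
      U n (Function.update v i b i) (wt (Function.update v i b)) = 0 := by
  have hw := wt_update_true v i
  have hle := wt_le (Function.update v i true)
  set k := wt (Function.update v i false) with hk
  simp only [Fintype.sum_bool, mu, Function.update_self, ← hk, hw, U, if_true,
    Bool.false_eq_true, if_false]
  have hc : (n.choose (k + 1) : ℝ) * ((k : ℝ) + 1) = n.choose k * ((n : ℝ) - k) := by
    rw [← Nat.cast_sub (by omega)]
    exact_mod_cast Nat.choose_succ_right_eq n k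
  have p1 : (n.choose (k + 1) : ℝ) ≠ 0 := by exact_mod_cast (Nat.choose_pos (by omega)).ne'
  have p2 : (n.choose k : ℝ) ≠ 0 := by exact_mod_cast (Nat.choose_pos (by omega)).ne'
  have p3 : (n : ℝ) - k ≠ 0 := by
    rw [sub_ne_zero]; exact_mod_cast (by omega : n ≠ k)
  have p4 : (k : ℝ) + 1 ≠ 0 := by positivity
  have q1 := (q_pos n k).ne'
  have q2 := (q_pos n (k + 1)).ne'
  push_cast
  field_simp
  linear_combination (-(n : ℝ)) * hc

lemma wt_eq_zero {n : ℕ} {v : Fin n → Bool} (h : wt v = 0) (i : Fin n) : v i = false := by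
  unfold wt at h
  rw [Finset.card_eq_zero, Finset.filter_eq_empty_iff] at h
  simpa using h (Finset.mem_univ i)

lemma wt_eq_n {n : ℕ} {v : Fin n → Bool} (h : wt v = n) (i : Fin n) : v i = true := by
  unfold wt at h
  have h' : (Finset.univ.filter fun i => v i = true).card = (Finset.univ : Finset (Fin n)).card := by
    simpa using h
  rw [Finset.card_filter_eq_iff] at h'
  exact h' i (Finset.mem_univ i)

/-- In a constant column the pirate bit is forced, and every user gets the score `R`. -/
lemma extreme {n : ℕ} (v : Fin n → Bool) (y : Bool) (hy : ∃ i, y = v i)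
    (h : wt v = 0 ∨ wt v = n) (i : Fin n) : sgn y * U n (v i) (wt v) = R n (wt v) := by
  obtain ⟨i', rfl⟩ := hy
  have hn : (n : ℝ) ≠ 0 := by
    have := i.pos
    positivity
  have hq := (q_pos n 0).ne'
  rcases h with h | h
  · rw [wt_eq_zero h, wt_eq_zero h, h]
    simp [sgn, U, R]
    field_simp
  · rw [wt_eq_n h, wt_eq_n h, h]
    simp [sgn, U, R, q_last]
    field_simp

/-- In a non-constant column the scores of the `k` ones and the `n - k` zeros cancel exactly. -/
lemma sum_score {n : ℕ} (v : Fin n → Bool) (y : Bool) (hy : ∃ i, y = v i) :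
    ∑ i, sgn y * U n (v i) (wt v) = n * R n (wt v) := by
  by_cases h : wt v = 0 ∨ wt v = n
  · simp [extreme v y hy h]
  · rw [← Finset.mul_sum, R, if_neg h]
    push Not at h
    have hlt := lt_of_le_of_ne (wt_le v) h.2
    have p1 : (wt v : ℝ) ≠ 0 := by exact_mod_cast h.1
    have p3 : (n : ℝ) - wt v ≠ 0 := by
      rw [sub_ne_zero]; exact_mod_cast hlt.ne'
    have hq := (q_pos n (wt v)).ne'
    have key : ∑ i, U n (v i) (wt v) = 0 := by
      rw [← Finset.sum_filter_add_sum_filter_not Finset.univ (fun i => v i = true)]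
      rw [Finset.sum_congr rfl (g := fun _ => U n true (wt v)) (by simp +contextual)]
      rw [Finset.sum_congr (s₁ := Finset.univ.filter fun i => ¬ v i = true) rfl
        (g := fun _ => U n false (wt v)) (by simp +contextual)]
      have := Finset.card_filter_add_card_filter_not (s := (Finset.univ : Finset (Fin n)))
        (fun i => v i = true)
      rw [Finset.card_univ, Fintype.card_fin] at this
      have h2 : ((Finset.univ.filter fun i => ¬ v i = true).card : ℝ) = n - wt v := by
        rw [eq_sub_iff_add_eq, add_comm]; exact_mod_cast this
      rw [Finset.sum_const, Finset.sum_const, nsmul_eq_mul, nsmul_eq_mul, h2]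
      change (wt v : ℝ) * _ + _ = _
      simp only [U, if_true, Bool.false_eq_true, if_false]
      field_simp
      ring
    rw [key]; ring

/-- The one-column bound `exp x ≤ 1 + x + x²` for `x = α (score - R)`. In a constant column `x = 0`,
so the square is bounded by `α² U²` in every case. -/
lemma exp_le {n : ℕ} (hn : 2 ≤ n) (v : Fin n → Bool) (y : Bool) (hy : ∃ i, y = v i) (i : Fin n)
    (α : ℝ) (hα : α = 1 / (64 * (n : ℝ) ^ 2)) :
    Real.exp (α * (sgn y * U n (v i) (wt v) - R n (wt v))) ≤
      1 - α * R n (wt v) + α ^ 2 * U n (v i) (wt v) ^ 2 + sgn y * α * U n (v i) (wt v) := by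
  have hn' : (0 : ℝ) < n := by positivity
  by_cases h : wt v = 0 ∨ wt v = n
  · have e := extreme v y hy h i
    have e' : sgn y * α * U n (v i) (wt v) = α * R n (wt v) := by rw [← e]; ring
    rw [e, sub_self, mul_zero, Real.exp_zero, e']
    nlinarith [sq_nonneg (α * U n (v i) (wt v))]
  · have hs : |sgn y| = 1 := by cases y <;> simp [sgn]
    have hs2 : sgn y ^ 2 = 1 := by cases y <;> simp [sgn]
    rw [R, if_neg h]
    have hx : |α * (sgn y * U n (v i) (wt v) - 0)| ≤ 1 := by
      rw [sub_zero, abs_mul, abs_mul, hs, one_mul, hα, abs_of_nonneg (by positivity),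
        one_div, inv_mul_le_iff₀ (by positivity), mul_one]
      exact abs_U_le hn _ _ (wt_le v)
    have := (abs_le.1 (Real.abs_exp_sub_one_sub_id_le hx)).2
    have e : (α * (sgn y * U n (v i) (wt v) - 0)) ^ 2 = α ^ 2 * U n (v i) (wt v) ^ 2 := by
      linear_combination α ^ 2 * U n (v i) (wt v) ^ 2 * hs2
    rw [e] at this
    linarith


/-! ### The probability of accusing an innocent user -/

/-- The total score of user `i` for the codebook `W` and the pirate word `w`. -/
noncomputable def score {n ℓ : ℕ} (W : Fin n → Fin ℓ → Bool) (w : Fin ℓ → Bool) (i : Fin n) : ℝ :=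
  ∑ j, sgn (w j) * U n (W i j) (wt fun k => W k j)

/-- The probability of the codebook `W`. -/
noncomputable def pr {n ℓ : ℕ} (W : Fin n → Fin ℓ → Bool) : ℝ := ∏ j, mu fun k => W k j

lemma pr_nonneg {n ℓ : ℕ} (W : Fin n → Fin ℓ → Bool) : 0 ≤ pr W :=
  Finset.prod_nonneg fun _ _ => mu_nonneg _

lemma le_score_of_max {n ℓ : ℕ} (W : Fin n → Fin ℓ → Bool) (w : Fin ℓ → Bool)
    (hw : ∀ j, ∃ i, w j = W i j) (i : Fin n) (hi : ∀ i', score W w i' ≤ score W w i) :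
    ∑ j, R n (wt fun k => W k j) ≤ score W w i := by
  have hn : (0 : ℝ) < n := by
    have := i.pos
    positivity
  have h1 : ∑ i', score W w i' = n * ∑ j, R n (wt fun k => W k j) := by
    unfold score
    rw [Finset.sum_comm, Finset.mul_sum]
    exact Finset.sum_congr rfl fun j _ => sum_score (fun k => W k j) (w j) (hw j)
  have h2 : ∑ i', score W w i' ≤ n * score W w i := by
    simpa using Finset.sum_le_sum fun i' (_ : i' ∈ Finset.univ) => hi i'
  rw [h1] at h2
  exact le_of_mul_le_mul_left h2 hn

lemma alpha_R_le {n : ℕ} (hn : 2 ≤ n) (k : ℕ) : 1 / (64 * (n : ℝ) ^ 2) * R n k ≤ 1 := by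
  have hn' : (0 : ℝ) < n := by positivity
  rw [one_div, inv_mul_le_iff₀ (by positivity), mul_one]
  unfold R
  split_ifs
  · have h := abs_U_le hn false 0 (Nat.zero_le n)
    have hq := q_pos n 0
    have e : U n false 0 = -(1 / q n 0) := by
      simp only [U, Bool.false_eq_true, if_false, Nat.cast_zero, sub_zero]
      field_simp
    rw [e, abs_neg, abs_of_nonneg (by positivity)] at h
    exact h
  · positivity

/-- A user `i` outside the coalition is accused with probability at most `exp (-ℓ / (64 n²))`. Here
`B W w` is the probability that the adversary outputs `w`, cut off to feasible `w`; it does not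
depend on row `i`. The tracer `T` is any choice of a user of maximal score. -/
lemma accuse_bound {n ℓ : ℕ} (hn : 2 ≤ n) (i : Fin n)
    (B : (Fin n → Fin ℓ → Bool) → (Fin ℓ → Bool) → ℝ) (hB0 : ∀ W w, 0 ≤ B W w)
    (hB1 : ∀ W, ∑ w, B W w ≤ 1) (hBi : ∀ W w r, B (Function.update W i r) w = B W w)
    (hBf : ∀ W w, B W w ≠ 0 → ∀ j, ∃ i', w j = W i' j)
    (T : (Fin n → Fin ℓ → Bool) → (Fin ℓ → Bool) → Fin n)
    (hT : ∀ W w i', score W w i' ≤ score W w (T W w)) :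
    ∑ W, ∑ w, (if T W w = i then pr W * B W w else 0) ≤
      Real.exp (-(ℓ / (64 * (n : ℝ) ^ 2))) := by
  have hn' : (0 : ℝ) < n := by positivity
  obtain ⟨α, hα⟩ : ∃ α : ℝ, α = 1 / (64 * (n : ℝ) ^ 2) := ⟨_, rfl⟩
  have hα0 : 0 < α := by rw [hα]; positivity
  -- `g` is the one-column bound for a given pirate word, and `f` is `g` without its linear score term
  let f : (Fin n → Bool) → ℝ := fun v =>
    mu v * (1 - α * R n (wt v) + α ^ 2 * U n (v i) (wt v) ^ 2)
  let g : (Fin ℓ → Bool) → Fin ℓ → (Fin n → Bool) → ℝ := fun w j v =>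
    mu v * (1 - α * R n (wt v) + α ^ 2 * U n (v i) (wt v) ^ 2 +
      sgn (w j) * α * U n (v i) (wt v))
  have hf0 : ∀ v, 0 ≤ f v := fun v => by
    refine mul_nonneg (mu_nonneg v) ?_
    have h1 := alpha_R_le hn (wt v)
    rw [← hα] at h1
    have : 0 ≤ α ^ 2 * U n (v i) (wt v) ^ 2 := by positivity
    linarith
  have step1 : ∀ W w, (if T W w = i then pr W * B W w else 0) ≤
      B W w * ∏ j, g w j fun k => W k j := by
    intro W w
    rcases eq_or_ne (B W w) 0 with h0 | h0
    · simp [h0]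
    have hfeas := hBf W w h0
    have hexp : ∀ j, mu (fun k => W k j) * Real.exp (α * (sgn (w j) *
        U n (W i j) (wt fun k => W k j) - R n (wt fun k => W k j))) ≤ g w j fun k => W k j :=
      fun j => mul_le_mul_of_nonneg_left (exp_le hn (fun k => W k j) (w j) (hfeas j) i α hα)
        (mu_nonneg _)
    have hprod : pr W * Real.exp (α * (score W w i - ∑ j, R n (wt fun k => W k j))) ≤
        ∏ j, g w j fun k => W k j := by
      have := Finset.prod_le_prod (s := Finset.univ)
        (fun j _ => mul_nonneg (mu_nonneg fun k => W k j) (Real.exp_pos _).le)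
        (fun j _ => hexp j)
      rwa [Finset.prod_mul_distrib, ← Real.exp_sum, ← Finset.mul_sum,
        Finset.sum_sub_distrib] at this
    have hpos : 0 ≤ pr W * Real.exp (α * (score W w i - ∑ j, R n (wt fun k => W k j))) :=
      mul_nonneg (pr_nonneg W) (Real.exp_pos _).le
    split_ifs with h
    · rw [mul_comm]
      refine mul_le_mul_of_nonneg_left (le_trans ?_ hprod) (hB0 W w)
      refine le_mul_of_one_le_right (pr_nonneg W) (Real.one_le_exp (mul_nonneg hα0.le ?_))
      rw [sub_nonneg]
      exact le_score_of_max W w hfeas i fun i' => h ▸ hT W w i'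
    · exact mul_nonneg (hB0 W w) (hpos.trans hprod)
  have step2 : ∀ w, ∑ W, B W w * ∏ j, g w j (fun k => W k j) =
      ∑ W, B W w * ∏ j, f (fun k => W k j) := by
    intro w
    refine resum i (fun W => B W w) (fun W r => hBi W w r) (g w) (fun _ => f) fun j v => ?_
    have h := mu_U_cancel v i
    simp only [Fintype.sum_bool] at h
    simp only [g, f, Fintype.sum_bool]
    linear_combination (sgn (w j) * α) * h
  have hsum : ∑ v, f v ≤ 1 - α := by
    have e : ∑ v, f v = ∑ v : Fin n → Bool, mu v - α * ∑ v : Fin n → Bool, mu v * R n (wt v) +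
        α ^ 2 * ∑ v : Fin n → Bool, mu v * U n (v i) (wt v) ^ 2 := by
      rw [Finset.mul_sum, Finset.mul_sum, ← Finset.sum_sub_distrib, ← Finset.sum_add_distrib]
      exact Finset.sum_congr rfl fun v _ => by ring
    rw [e, sum_mu_one, sum_mu_R n hn]
    have h1 := mul_le_mul_of_nonneg_left (sum_mu_sq hn i) (sq_nonneg α)
    have h2 : α ^ 2 * (64 * (n : ℝ) ^ 2) = α := by
      rw [hα]; field_simp
    linarith
  calc _ ≤ ∑ W, ∑ w, B W w * ∏ j, g w j (fun k => W k j) :=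
        Finset.sum_le_sum fun W _ => Finset.sum_le_sum fun w _ => step1 W w
    _ = ∑ W, (∑ w, B W w) * ∏ j, f (fun k => W k j) := by
        rw [Finset.sum_comm, Finset.sum_congr rfl fun w _ => step2 w, Finset.sum_comm]
        exact Finset.sum_congr rfl fun W _ => (Finset.sum_mul _ _ _).symm
    _ ≤ ∑ W : Fin n → Fin ℓ → Bool, ∏ j, f (fun k => W k j) :=
        Finset.sum_le_sum fun W _ =>
          mul_le_of_le_one_left (Finset.prod_nonneg fun _ _ => hf0 _) (hB1 W)
    _ = (∑ v, f v) ^ ℓ := sum_prod_col f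
    _ ≤ (Real.exp (-α)) ^ ℓ := by
        refine pow_le_pow_left₀ (Finset.sum_nonneg fun v _ => hf0 v) (hsum.trans ?_) ℓ
        have := Real.add_one_le_exp (-α)
        linarith
    _ = _ := by
        rw [← Real.exp_nat_mul, hα]
        congr 1
        ring

lemma sum_pr (n ℓ : ℕ) : ∑ W : Fin n → Fin ℓ → Bool, pr W = 1 := by
  unfold pr
  rw [sum_prod_col, sum_mu_one, one_pow]

/-! ### The code -/

/-- The code generator: independent columns, each with law `mu`. -/
noncomputable def gen (n ℓ : ℕ) : PMF (Fin n → Fin ℓ → Bool) :=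
  PMF.ofFintype (fun W => ENNReal.ofReal (pr W)) (by
    rw [← ENNReal.ofReal_sum_of_nonneg fun W _ => pr_nonneg W, sum_pr, ENNReal.ofReal_one])

lemma joint_apply {α β : Type*} [Fintype α] [Fintype β] (p : PMF α) (K : α → PMF β) (x : α × β) :
    (p.bind fun a => (K a).map fun b => (a, b)) x = p x.1 * K x.1 x.2 := by
  classical
  obtain ⟨a, b⟩ := x
  rw [PMF.bind_apply, tsum_eq_single a]
  · congr 1
    rw [PMF.map_apply, tsum_eq_single b]
    · simp
    · intro b' hb'
      simp [hb'.symm]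
  · intro a' ha'
    rw [PMF.map_apply]
    simp [ha'.symm]

end Tardos

open Tardos

/-- Tardos's theorem: there exist `ξ`-secure fingerprinting codes of length
`O(n² log(n/ξ))` for `n` users. -/
theorem tardos_fingerprinting_codes :
    ∃ C : ℝ, 0 < C ∧
      ∀ n : ℕ, 2 ≤ n → ∀ ξ : ℝ, 0 < ξ → ξ < 1 →
        ∃ ℓ : ℕ, (ℓ : ℝ) ≤ C * (n : ℝ) ^ 2 * Real.log ((n : ℝ) / ξ) ∧
          ∃ Gen : PMF (Fin n → Fin ℓ → Bool),
            ∃ Trace : (Fin n → Fin ℓ → Bool) → (Fin ℓ → Bool) → Fin n,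
              ∀ S : Set (Fin n), S.Nonempty →
                ∀ A : ({i : Fin n // i ∈ S} → Fin ℓ → Bool) → PMF (Fin ℓ → Bool),
                  ∑' p : {p : (Fin n → Fin ℓ → Bool) × (Fin ℓ → Bool) //
                      (∀ j : Fin ℓ, ∃ i ∈ S, p.2 j = p.1 i j) ∧ Trace p.1 p.2 ∉ S},
                    (Gen.bind fun W => (A fun i => W i.1).map fun w' => (W, w')) p.1
                    ≤ ENNReal.ofReal ξ := by
  refine ⟨70, by norm_num, fun n hn ξ hξ0 hξ1 => ?_⟩
  have hn2 : (2 : ℝ) ≤ n := by exact_mod_cast hn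
  have hn' : (0 : ℝ) < n := by linarith
  set L := Real.log ((n : ℝ) / ξ) with hL
  have hL' : 1 / 2 ≤ L := by
    have h1 : Real.log 2 ≤ L := by
      refine Real.log_le_log (by norm_num) ?_
      rw [le_div_iff₀ hξ0]
      nlinarith
    have := Real.log_two_gt_d9
    linarith
  obtain ⟨ℓ, hℓ⟩ : ∃ ℓ : ℕ, ℓ = ⌈64 * (n : ℝ) ^ 2 * L⌉₊ := ⟨_, rfl⟩
  have hne : Nonempty (Fin n) := ⟨⟨0, by omega⟩⟩
  have hmax : ∀ (W : Fin n → Fin ℓ → Bool) (w : Fin ℓ → Bool), ∃ i, ∀ i',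
      score W w i' ≤ score W w i := fun W w => Finite.exists_max (score W w)
  choose T hT using hmax
  refine ⟨ℓ, ?_, gen n ℓ, T, fun S _ A => ?_⟩
  -- the rounding `+ 1` is absorbed because `6 n² L ≥ 12`
  · have h1 : (ℓ : ℝ) < 64 * (n : ℝ) ^ 2 * L + 1 := by
      rw [hℓ]; exact Nat.ceil_lt_add_one (by positivity)
    nlinarith [mul_le_mul (show (4 : ℝ) ≤ n ^ 2 by nlinarith) hL' (by norm_num) (by positivity)]
  classical
  -- the adversary's output law, cut off to the words feasible for the coalition
  let B : (Fin n → Fin ℓ → Bool) → (Fin ℓ → Bool) → ℝ := fun W w =>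
    if ∀ j, ∃ i ∈ S, w j = W i j then (A (fun i => W i.1) w).toReal else 0
  have hB0 : ∀ W w, 0 ≤ B W w := fun W w => by
    simp only [B]; split_ifs <;> positivity
  have hB1 : ∀ W, ∑ w, B W w ≤ 1 := fun W => by
    calc ∑ w, B W w ≤ ∑ w, (A (fun i => W i.1) w).toReal :=
          Finset.sum_le_sum fun w _ => by
            simp only [B]; split_ifs <;> simp
      _ = 1 := by
          rw [← ENNReal.toReal_sum fun w _ => PMF.apply_ne_top _ w, ← tsum_fintype (L := .unconditional _),
            PMF.tsum_coe, ENNReal.toReal_one]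
  have hBf : ∀ W w, B W w ≠ 0 → ∀ j, ∃ i, w j = W i j := fun W w h j => by
    simp only [B, ne_eq, ite_eq_right_iff, not_forall] at h
    obtain ⟨i, -, hi⟩ := h.1 j
    exact ⟨i, hi⟩
  have hBi : ∀ i ∉ S, ∀ W w r, B (Function.update W i r) w = B W w := by
    intro i hi W w r
    have hu : ∀ k ∈ S, Function.update W i r k = W k := fun k hk =>
      Function.update_of_ne (by rintro rfl; exact hi hk) _ _
    have e1 : (fun k : {i : Fin n // i ∈ S} => Function.update W i r k.1) = fun k => W k.1 :=
      funext fun k => hu k.1 k.2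
    have e2 : (∀ j, ∃ k ∈ S, w j = Function.update W i r k j) ↔ ∀ j, ∃ k ∈ S, w j = W k j :=
      forall_congr' fun j => exists_congr fun k => and_congr_right fun hk => by rw [hu k hk]
    simp only [B, e1, e2]
  have hreal : ∑ i : Fin n, ∑ W, ∑ w, (if i ∉ S then if T W w = i then pr W * B W w else 0 else 0)
      ≤ ξ := by
    have hexp : Real.exp (-(ℓ / (64 * (n : ℝ) ^ 2))) ≤ ξ / n := by
      rw [← Real.le_log_iff_exp_le (by positivity)]
      have e : Real.log (ξ / n) = -L := by rw [hL, ← Real.log_inv, inv_div]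
      rw [e, neg_le_neg_iff, le_div_iff₀ (by positivity), hℓ, mul_comm]
      exact Nat.le_ceil _
    calc _ ≤ ∑ _i : Fin n, ξ / n := by
          refine Finset.sum_le_sum fun i _ => ?_
          by_cases hi : i ∈ S
          · simp only [hi, not_true_eq_false, if_false, Finset.sum_const_zero]
            positivity
          · simp only [hi, not_false_eq_true, if_true]
            exact (accuse_bound hn i B hB0 hB1 (hBi i hi) hBf T hT).trans hexp
      _ = ξ := by
          simp
          field_simp
  refine le_trans (le_of_eq ?_) (ENNReal.ofReal_le_ofReal hreal)
  have hnn : ∀ i W w, 0 ≤ (if i ∉ S then if T W w = i then pr W * B W w else 0 else 0) := by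
    intro i W w
    have := mul_nonneg (pr_nonneg W) (hB0 W w)
    split_ifs <;> simp [this]
  rw [Finset.sum_comm, Finset.sum_congr rfl fun W _ => Finset.sum_comm, ← Fintype.sum_prod_type',
    ENNReal.ofReal_sum_of_nonneg fun p _ => Finset.sum_nonneg fun i _ => hnn _ _ _]
  let E : Set ((Fin n → Fin ℓ → Bool) × (Fin ℓ → Bool)) :=
    {p | (∀ j : Fin ℓ, ∃ i ∈ S, p.2 j = p.1 i j) ∧ T p.1 p.2 ∉ S}
  refine (tsum_subtype E _).trans ?_
  rw [tsum_fintype]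
  refine Finset.sum_congr rfl fun p _ => ?_
  have hsingle : ∑ i, (if i ∉ S then if T p.1 p.2 = i then pr p.1 * B p.1 p.2 else 0 else 0) =
      if T p.1 p.2 ∉ S then pr p.1 * B p.1 p.2 else 0 := by
    rw [Finset.sum_eq_single (T p.1 p.2)]
    · simp
    · intro i _ hi
      simp [hi.symm]
    · simp
  rw [hsingle]
  by_cases h1 : ∀ j : Fin ℓ, ∃ i ∈ S, p.2 j = p.1 i j
  · by_cases h2 : T p.1 p.2 ∈ S
    · rw [Set.indicator_of_notMem (s := E) fun h => h.2 h2, if_neg (not_not.2 h2), ENNReal.ofReal_zero]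
    · rw [Set.indicator_of_mem (s := E) ⟨h1, h2⟩, if_pos h2, joint_apply]
      simp only [B]
      rw [if_pos h1, ENNReal.ofReal_mul (pr_nonneg _), ENNReal.ofReal_toReal (PMF.apply_ne_top _ _)]
      rfl
  · rw [Set.indicator_of_notMem (s := E) fun h => h1 h.1]
    simp [B, h1]
end

section
/- Let n ≥ 2, ℓ ≥ 1, L ≥ 1 be natural numbers, let ξ ≥ 0 and γ ≥ 0 be reals, and let (Gen, Trace) with Gen : PMF (Fin n → Fin ℓ → Bool) and Trace : (Fin n → Fin ℓ → Bool) → (Fin ℓ → Bool) → Fin n be a ξ-secure fingerprinting code of length ℓ for n users. Fix a user i* : Fin n and let S = {i : Fin n | i ≠ i*}. Consider the experiment: sample a codebook W from Gen; independently sample a key u i uniformly from Fin L → Bool for each i : Fin n; independently sample a position r i j uniformly from Fin L for each i : Fin n and j : Fin ℓ; and form ciphertexts c : Fin ℓ → Fin n → Fin L × Bool by c j i = (r i j, xor ((u i) (r i j)) (W i j)). Let P be a pirate decoder: a function taking a key assignment restricted to S and a ciphertext tuple c : Fin ℓ → Fin n → Fin L × Bool and returning a PMF over Fin ℓ → Bool.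 Assume P is γ-available: for every key assignment u : Fin n → (Fin L → Bool) and every ciphertext tuple c, the probability under P((u i)_{i ∈ S}, c) of the event {w' | ∃ j : Fin ℓ, ∃ b : Bool, (∀ i ∈ S, xor ((u i) ((c j i).1)) ((c j i).2) = b) ∧ w' j ≠ b} is at most γ. Then the probability, over the entire experiment and the pirate's randomness, that Trace W w' = i*, where w' is the pirate's output on inputs (u i)_{i ∈ S} and c, is at most ξ + γ + ℓ² / L. -/
/-! The proof is a hybrid argument. Fix the codebook and the positions.

*Step 1: replacing the ciphertexts of `istar` by noise.* If the positions `r istar` used for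
the absent user are pairwise distinct, the pad bits `u istar (r istar j)` are independent uniform
bits that the pirate never sees, so the ciphertext bits of `istar` may be replaced by fresh
uniform bits without changing the distribution of the output (`expect_pad`). The positions collide
with probability at most `ℓ² / L` (`expect_collision_le`), by a union bound over pairs.

*Step 2: the fingerprinting adversary.* With noise in place of the ciphertexts of `istar`, the
experiment can be run from the rows `W i`, `i ≠ istar`, alone: it is an adversary against the
fingerprinting code (`simulator`). A word outside the feasible set disagrees at some
position with the common bit of all coalition rows, which is also the common decryption of the
ciphertexts at that position; availability bounds this event by `γ`. A feasible word traced
to `istar` is exactly a break of the code, of probability at most `ξ`. -/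

open scoped ENNReal

/-- Uniform distribution over position assignments `Fin n → Fin ℓ → Fin L`,
with nonemptiness supplied by `1 ≤ L`. -/
noncomputable def uniformPositions (n ℓ L : ℕ) (hL : 1 ≤ L) :
    PMF (Fin n → Fin ℓ → Fin L) :=
  haveI : Nonempty (Fin L) := ⟨⟨0, hL⟩⟩
  PMF.uniformOfFintype (Fin n → Fin ℓ → Fin L)

/-- Expectation of a nonnegative function on a finite type. -/
noncomputable def expect {α : Type*} [Fintype α] (p : PMF α) (f : α → ℝ≥0∞) : ℝ≥0∞ :=
  ∑ a, p a * f a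

section expect

variable {α β : Type*} [Fintype α] [Fintype β]

lemma bind_apply_eq_expect {γ : Type*} (p : PMF α) (f : α → PMF γ) (c : γ) :
    (p.bind f) c = expect p fun a => f a c := by
  simp [expect, PMF.bind_apply, tsum_fintype]

lemma expect_const (p : PMF α) (c : ℝ≥0∞) : expect p (fun _ => c) = c := by
  have h := p.tsum_coe
  rw [tsum_fintype] at h
  simp [expect, ← Finset.sum_mul, h]

lemma expect_mono (p : PMF α) {f g : α → ℝ≥0∞} (h : ∀ a, f a ≤ g a) :
    expect p f ≤ expect p g :=
  Finset.sum_le_sum fun a _ => mul_le_mul_right (h a) _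

lemma expect_add (p : PMF α) (f g : α → ℝ≥0∞) :
    expect p (fun a => f a + g a) = expect p f + expect p g := by
  simp [expect, mul_add, Finset.sum_add_distrib]

lemma expect_le_const (p : PMF α) {f : α → ℝ≥0∞} {c : ℝ≥0∞} (h : ∀ a, f a ≤ c) :
    expect p f ≤ c :=
  (expect_mono p h).trans_eq (expect_const p c)

lemma expect_comm (p : PMF α) (q : PMF β) (f : α → β → ℝ≥0∞) :
    expect p (fun a => expect q (f a)) = expect q fun b => expect p fun a => f a b := by
  simp only [expect, Finset.mul_sum]
  rw [Finset.sum_comm]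
  exact Finset.sum_congr rfl fun _ _ => Finset.sum_congr rfl fun _ _ => mul_left_comm _ _ _

lemma expect_sum {ι : Type*} (s : Finset ι) (p : PMF α) (f : ι → α → ℝ≥0∞) :
    expect p (fun a => ∑ i ∈ s, f i a) = ∑ i ∈ s, expect p (f i) := by
  simp only [expect, Finset.mul_sum]
  rw [Finset.sum_comm]

lemma expect_uniform_equiv [Nonempty α] (e : α ≃ α) (f : α → ℝ≥0∞) :
    expect (PMF.uniformOfFintype α) (fun a => f (e a)) = expect (PMF.uniformOfFintype α) f := by
  simp only [expect, PMF.uniformOfFintype_apply]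
  exact Equiv.sum_comp e fun a => (Fintype.card α : ℝ≥0∞)⁻¹ * f a

end expect

/-- Adding, at the positions `ρ j`, the bits `v j` to the pad of user `i`; other positions and
other users are untouched. -/
noncomputable def maskKey {n ℓ L : ℕ} (i : Fin n) (ρ : Fin ℓ → Fin L) (v : Fin ℓ → Bool)
    (u : Fin n → Fin L → Bool) : Fin n → Fin L → Bool :=
  fun i' x => xor (u i' x) (if i' = i then Function.extend ρ v (fun _ => false) x else false)

lemma maskKey_involutive {n ℓ L : ℕ} (i : Fin n) (ρ : Fin ℓ → Fin L) (v : Fin ℓ → Bool) :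
    Function.Involutive (maskKey i ρ v) := by
  intro u
  funext i' x
  simp [maskKey]

lemma xor_involutive {ℓ : ℕ} (w : Fin ℓ → Bool) :
    Function.Involutive fun (v : Fin ℓ → Bool) j => xor (v j) (w j) := by
  intro v
  funext j
  simp

/-- Perfect secrecy of the one-time pad at distinct positions: the ciphertext bits of user `i` are
uniform and independent of the keys of all other users. -/
lemma expect_pad {n ℓ L : ℕ} (i : Fin n) (ρ : Fin ℓ → Fin L) (hρ : Function.Injective ρ)
    (w : Fin ℓ → Bool)
    (F : ({i' : Fin n // i' ≠ i} → Fin L → Bool) → (Fin ℓ → Bool) → ℝ≥0∞) :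
    expect (PMF.uniformOfFintype (Fin n → Fin L → Bool))
        (fun u => F (fun i' => u i'.1) fun j => xor (u i (ρ j)) (w j)) =
      expect (PMF.uniformOfFintype (Fin n → Fin L → Bool)) fun u =>
        expect (PMF.uniformOfFintype (Fin ℓ → Bool)) fun v => F (fun i' => u i'.1) v := by
  -- Masking the key by `v` is a bijection on keys, so it may be done for a random `v`.
  have h1 : ∀ v : Fin ℓ → Bool,
      expect (PMF.uniformOfFintype (Fin n → Fin L → Bool))
        (fun u => F (fun i' => u i'.1) fun j => xor (u i (ρ j)) (w j)) =
      expect (PMF.uniformOfFintype (Fin n → Fin L → Bool))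
        (fun u => F (fun i' => u i'.1) fun j => xor (v j) (xor (u i (ρ j)) (w j))) := by
    intro v
    rw [← expect_uniform_equiv (maskKey_involutive i ρ v).toPerm]
    congr 1
    funext u
    simp only [Function.Involutive.coe_toPerm]
    congr 1
    · funext i' x
      simp [maskKey, i'.2]
    · funext j
      simp only [maskKey, if_true, hρ.extend_apply]
      cases u i (ρ j) <;> cases v j <;> cases w j <;> rfl
  rw [← expect_const (PMF.uniformOfFintype (Fin ℓ → Bool)) (expect _ _)]
  conv_lhs => arg 2; ext v; rw [h1 v]
  rw [expect_comm]
  congr 1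
  funext u
  exact expect_uniform_equiv (xor_involutive fun j => xor (u i (ρ j)) (w j)).toPerm
    fun v => F (fun i' => u i'.1) v

/-- Two given positions coincide with probability at most `1 / L`. -/
lemma expect_pair_le {n ℓ L : ℕ} (hL : 1 ≤ L) (i : Fin n) {j k : Fin ℓ} (hjk : j ≠ k) :
    expect (uniformPositions n ℓ L hL) (fun r => if r i j = r i k then 1 else 0)
      ≤ (L : ℝ≥0∞)⁻¹ := by
  classical
  have : Nonempty (Fin L) := ⟨⟨0, hL⟩⟩
  -- Shifting position `j` by a constant `x` preserves the distribution, and for each `r` exactly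
  -- one shift makes the two positions coincide.
  have : NeZero L := ⟨by omega⟩
  have h1 : ∀ x : Fin L,
      expect (uniformPositions n ℓ L hL) (fun r => if r i j = r i k then 1 else 0) =
      expect (uniformPositions n ℓ L hL) (fun r => if r i j + x = r i k then 1 else 0) := by
    intro x
    let e : (Fin n → Fin ℓ → Fin L) ≃ (Fin n → Fin ℓ → Fin L) :=
      Equiv.piCongrRight fun _ => Equiv.piCongrRight fun j' =>
        if j' = j then Equiv.addRight x else Equiv.refl _
    have h := expect_uniform_equiv e (fun r => if r i j = r i k then (1 : ℝ≥0∞) else 0)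
    simpa [e, uniformPositions, hjk.symm] using h.symm
  have h2 : (L : ℝ≥0∞) *
      expect (uniformPositions n ℓ L hL) (fun r => if r i j = r i k then 1 else 0) = 1 := by
    calc _ = ∑ x : Fin L,
          expect (uniformPositions n ℓ L hL) (fun r => if r i j + x = r i k then 1 else 0) := by
          simp [← h1]
      _ = expect (uniformPositions n ℓ L hL)
            (fun r => ∑ x : Fin L, if r i j + x = r i k then 1 else 0) := (expect_sum _ _ _).symm
      _ = expect (uniformPositions n ℓ L hL) (fun _ => 1) := by
          congr 1
          funext r
          have : ∀ x : Fin L, (r i j + x = r i k) ↔ x = r i k - r i j := fun x => by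
            rw [eq_sub_iff_add_eq, add_comm]
          simp [this]
      _ = 1 := expect_const _ _
  exact (ENNReal.eq_inv_of_mul_eq_one_left (by rwa [mul_comm])).le

open Classical in
/-- The positions of user `i` collide with probability at most `ℓ² / L`. -/
lemma expect_collision_le {n ℓ L : ℕ} (hL : 1 ≤ L) (i : Fin n) :
    expect (uniformPositions n ℓ L hL)
        (fun r => if Function.Injective (r i) then 0 else 1)
      ≤ (ℓ : ℝ≥0∞) ^ 2 / (L : ℝ≥0∞) := by
  calc _ ≤ expect (uniformPositions n ℓ L hL) (fun r =>
          ∑ q : Fin ℓ × Fin ℓ, if q.1 ≠ q.2 ∧ r i q.1 = r i q.2 then 1 else 0) := by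
        refine expect_mono _ fun r => ?_
        split_ifs with h
        · exact zero_le
        · obtain ⟨j, k, hr, hjk⟩ := Function.not_injective_iff.1 h
          refine le_trans ?_ (Finset.single_le_sum (fun _ _ => zero_le)
            (Finset.mem_univ (j, k)))
          simp [hr, hjk]
    _ = ∑ q : Fin ℓ × Fin ℓ, expect (uniformPositions n ℓ L hL) (fun r =>
          if q.1 ≠ q.2 ∧ r i q.1 = r i q.2 then 1 else 0) := expect_sum _ _ _
    _ ≤ ∑ _q : Fin ℓ × Fin ℓ, (L : ℝ≥0∞)⁻¹ := by
        refine Finset.sum_le_sum fun q _ => ?_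
        by_cases hq : q.1 = q.2
        · simp [hq, expect_const]
        · simpa [hq] using expect_pair_le hL i hq
    _ = _ := by simp [div_eq_mul_inv, sq]

/-- The tuple of ciphertexts in which every user `i ≠ istar` receives encryptions of `W i`
and user `istar` receives the bits `v`. -/
def hybridCiphertext {n ℓ L : ℕ} (istar : Fin n)
    (W : {i : Fin n // i ≠ istar} → Fin ℓ → Bool) (u : Fin n → Fin L → Bool)
    (r : Fin n → Fin ℓ → Fin L) (v : Fin ℓ → Bool) : Fin ℓ → Fin n → Fin L × Bool :=
  fun j i => (r i j, if h : i = istar then v j else xor (u i (r i j)) (W ⟨i, h⟩ j))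

/-- The fingerprinting adversary of the coalition of all users but `istar`: it runs the
pirate decoder `P` on self-generated keys and positions, with uniform bits in place of the
ciphertexts of `istar`. -/
noncomputable def simulator {n ℓ L : ℕ} (hL : 1 ≤ L) (istar : Fin n)
    (P : ({i : Fin n // i ≠ istar} → Fin L → Bool) →
      (Fin ℓ → Fin n → Fin L × Bool) → PMF (Fin ℓ → Bool))
    (W : {i : Fin n // i ≠ istar} → Fin ℓ → Bool) : PMF (Fin ℓ → Bool) :=
  (uniformPositions n ℓ L hL).bind fun r =>
    (PMF.uniformOfFintype (Fin n → Fin L → Bool)).bind fun u =>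
      (PMF.uniformOfFintype (Fin ℓ → Bool)).bind fun v =>
        P (fun i => u i.1) (hybridCiphertext istar W u r v)

lemma map_apply_eq_expect {α β : Type*} [Fintype α] [DecidableEq β] (p : PMF α) (f : α → β)
    (b : β) : (p.map f) b = expect p fun a => if b = f a then 1 else 0 := by
  simp only [PMF.map_apply, expect, tsum_fintype, mul_ite, mul_one, mul_zero]
  exact Finset.sum_congr rfl fun a _ => by congr

lemma expect_bind {α β : Type*} [Fintype α] [Fintype β] (p : PMF α) (q : α → PMF β)
    (f : β → ℝ≥0∞) : expect (p.bind q) f = expect p fun a => expect (q a) f := by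
  simp only [expect, bind_apply_eq_expect, Finset.mul_sum, Finset.sum_mul]
  rw [Finset.sum_comm]
  exact Finset.sum_congr rfl fun _ _ => Finset.sum_congr rfl fun _ _ => mul_assoc _ _ _

open Classical in
lemma tsum_subtype_eq_expect {α : Type*} [Fintype α] (p : PMF α) (s : α → Prop) :
    ∑' a : {a // s a}, p a.1 = expect p fun a => if s a then 1 else 0 := by
  rw [show ∑' a : {a // s a}, p a.1 = ∑' a, Set.indicator {a | s a} p a from
    tsum_subtype {a | s a} p, tsum_fintype]
  simp [expect, Set.indicator_apply]

/-- For a fixed codebook, a `[0, 1]`-valued test `f` of the pirate's output has expectation in the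
real experiment at most `ℓ² / L` larger than its expectation under the simulator. -/
lemma real_le_simulator {n ℓ L : ℕ} (hL : 1 ≤ L) (istar : Fin n)
    (P : ({i : Fin n // i ≠ istar} → Fin L → Bool) →
      (Fin ℓ → Fin n → Fin L × Bool) → PMF (Fin ℓ → Bool))
    (W : Fin n → Fin ℓ → Bool) (f : (Fin ℓ → Bool) → ℝ≥0∞) (hf : ∀ w, f w ≤ 1) :
    (expect (PMF.uniformOfFintype (Fin n → Fin L → Bool)) fun u =>
        expect (uniformPositions n ℓ L hL) fun r =>
          expect (P (fun i => u i.1) fun j i => (r i j, xor (u i (r i j)) (W i j))) f)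
      ≤ expect (simulator hL istar P fun i => W i.1) f + (ℓ : ℝ≥0∞) ^ 2 / (L : ℝ≥0∞) := by
  classical
  rw [expect_comm]
  simp only [simulator, expect_bind]
  refine le_trans ?_ (add_le_add_right (expect_collision_le hL istar) _)
  rw [← expect_add]
  refine expect_mono _ fun r => ?_
  split_ifs with hr
  · -- The test as a function of the coalition's keys and the ciphertext bits of `istar` only.
    have h := expect_pad istar (r istar) hr (W istar) fun u' v => expect
      (P u' fun j i => (r i j,
        if h : i = istar then v j else xor (u' ⟨i, h⟩ (r i j)) (W i j))) f
    rw [add_zero]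
    refine le_of_eq (Eq.trans ?_ h)
    congr 1
    funext u
    congr 2
    funext j i
    by_cases hi : i = istar
    · subst hi
      simp
    · simp [hi]
  · exact (expect_le_const _ fun u => expect_le_const _ hf).trans le_add_self

open Classical in
/-- Availability: the simulator leaves the feasible set with probability at most `g`. -/
lemma simulator_infeasible_le {n ℓ L : ℕ} (hL : 1 ≤ L) (istar : Fin n) (g : ℝ≥0∞)
    (P : ({i : Fin n // i ≠ istar} → Fin L → Bool) →
      (Fin ℓ → Fin n → Fin L × Bool) → PMF (Fin ℓ → Bool))
    (hP : ∀ u : Fin n → Fin L → Bool, ∀ c : Fin ℓ → Fin n → Fin L × Bool,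
      ∑' w' : {w' : Fin ℓ → Bool // ∃ j : Fin ℓ, ∃ b : Bool,
          (∀ i : Fin n, i ≠ istar → xor (u i (c j i).1) (c j i).2 = b) ∧ w' j ≠ b},
        (P (fun i => u i.1) c) w'.1 ≤ g)
    (W : Fin n → Fin ℓ → Bool) :
    expect (simulator hL istar P fun i => W i.1)
      (fun w' => if ∀ j : Fin ℓ, ∃ i ≠ istar, w' j = W i j then 0 else 1) ≤ g := by
  simp only [simulator, expect_bind]
  refine expect_le_const _ fun r => expect_le_const _ fun u => expect_le_const _ fun v => ?_
  refine le_trans ?_ (hP u (hybridCiphertext istar (fun i => W i.1) u r v))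
  rw [tsum_subtype_eq_expect]
  refine expect_mono _ fun w' => ?_
  by_cases hw : ∀ j : Fin ℓ, ∃ i ≠ istar, w' j = W i j
  · simp [hw]
  · rw [if_neg hw, if_pos]
    push Not at hw
    obtain ⟨j, hj⟩ := hw
    refine ⟨j, !w' j, fun i hi => ?_, by simp⟩
    have hd : xor (u i (hybridCiphertext istar (fun i => W i.1) u r v j i).1)
        (hybridCiphertext istar (fun i => W i.1) u r v j i).2 = W i j := by
      simp [hybridCiphertext, hi]
    rw [hd]
    have := hj i hi
    revert this
    cases w' j <;> cases W i j <;> simp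

/-- Security of the traitor-tracing scheme `Π_TT` built from a fingerprinting code and
the one-time-pad encryption with a truly random pad of length `L`: any `γ`-available
pirate decoder missing user `istar`'s key is traced to `istar` with probability at most
`ξ + γ + ℓ²/L`. -/
theorem traitor_tracing_security
    (n ℓ L : ℕ) (hn : 2 ≤ n) (hℓ : 1 ≤ ℓ) (hL : 1 ≤ L)
    (ξ γ : ℝ) (hξ : 0 ≤ ξ) (hγ : 0 ≤ γ)
    (Gen : PMF (Fin n → Fin ℓ → Bool))
    (Trace : (Fin n → Fin ℓ → Bool) → (Fin ℓ → Bool) → Fin n)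
    -- `(Gen, Trace)` is a `ξ`-secure fingerprinting code of length `ℓ` for `n` users:
    (hFP : ∀ S : Set (Fin n), S.Nonempty →
      ∀ A : ({i : Fin n // i ∈ S} → Fin ℓ → Bool) → PMF (Fin ℓ → Bool),
        ∑' p : {p : (Fin n → Fin ℓ → Bool) × (Fin ℓ → Bool) //
            (∀ j : Fin ℓ, ∃ i ∈ S, p.2 j = p.1 i j) ∧ Trace p.1 p.2 ∉ S},
          (Gen.bind fun W => (A fun i => W i.1).map fun w' => (W, w')) p.1
          ≤ ENNReal.ofReal ξ)
    (istar : Fin n)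
    -- the pirate decoder, given the keys of the coalition `S = {i | i ≠ istar}`
    -- and a tuple of ciphertexts, outputs a distribution over words:
    (P : ({i : Fin n // i ≠ istar} → Fin L → Bool) →
      (Fin ℓ → Fin n → Fin L × Bool) → PMF (Fin ℓ → Bool))
    -- `P` is `γ`-available:
    (hP : ∀ u : Fin n → Fin L → Bool, ∀ c : Fin ℓ → Fin n → Fin L × Bool,
      ∑' w' : {w' : Fin ℓ → Bool // ∃ j : Fin ℓ, ∃ b : Bool,
          (∀ i : Fin n, i ≠ istar → xor (u i (c j i).1) (c j i).2 = b) ∧ w' j ≠ b},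
        (P (fun i => u i.1) c) w'.1 ≤ ENNReal.ofReal γ) :
    -- then the full tracing experiment accuses `istar` with probability
    -- at most `ξ + γ + ℓ²/L`:
    (Gen.bind fun W =>
      (PMF.uniformOfFintype (Fin n → Fin L → Bool)).bind fun u =>
        (uniformPositions n ℓ L hL).bind fun r =>
          (P (fun i => u i.1)
              (fun j i => (r i j, xor (u i (r i j)) (W i j)))).map
            (Trace W)) istar
      ≤ ENNReal.ofReal ξ + ENNReal.ofReal γ + (ℓ : ℝ≥0∞) ^ 2 / (L : ℝ≥0∞) := by
  classical
  let S : Set (Fin n) := {i | i ≠ istar}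
  have hS : S.Nonempty := by
    have : Nontrivial (Fin n) := Fin.nontrivial_iff_two_le.2 hn
    exact exists_ne istar
  have hX := hFP S hS (simulator hL istar P)
  rw [tsum_subtype_eq_expect, expect_bind] at hX
  have hmap : ∀ (W : Fin n → Fin ℓ → Bool) (f : (Fin n → Fin ℓ → Bool) × (Fin ℓ → Bool) → ℝ≥0∞)
      (p : PMF (Fin ℓ → Bool)),
      expect (p.map fun w' => (W, w')) f = expect p fun w' => f (W, w') := by
    intro W f p
    rw [← PMF.bind_pure_comp, expect_bind]
    congr 1
    funext w'
    simp [expect, PMF.pure_apply]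
  simp only [hmap] at hX
  simp only [bind_apply_eq_expect, map_apply_eq_expect]
  calc _ ≤ expect Gen fun W =>
        (expect (simulator hL istar P fun i => W i.1) fun w' =>
          if (∀ j : Fin ℓ, ∃ i ∈ S, w' j = W i j) ∧ Trace W w' ∉ S then 1 else 0)
        + (ENNReal.ofReal γ + (ℓ : ℝ≥0∞) ^ 2 / (L : ℝ≥0∞)) := by
        refine expect_mono _ fun W => ?_
        refine (real_le_simulator hL istar P W _ fun w => by split_ifs <;> simp).trans ?_
        rw [← add_assoc]
        refine add_le_add_left ?_ _
        refine le_trans ?_ (add_le_add_right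
          (simulator_infeasible_le hL istar _ P hP W) _)
        rw [← expect_add]
        refine expect_mono _ fun w' => ?_
        by_cases hw : ∀ j : Fin ℓ, ∃ i ≠ istar, w' j = W i j
        · rw [if_pos hw, add_zero]
          refine le_of_eq (if_congr ?_ rfl rfl)
          constructor
          · intro h
            exact ⟨hw, fun hn => hn h.symm⟩
          · rintro ⟨-, h⟩
            exact (not_not.1 h).symm
        · rw [if_neg hw]
          refine le_trans ?_ le_add_self
          split_ifs <;> simp
    _ ≤ _ := by
        rw [expect_add, expect_const, add_assoc]
        convert add_le_add_left hX _
end
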